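/- Let X, A, R be nonempty finite sets, let q be a probability mass function on R, and let f : X × R → (A → [0,1]) satisfy ∑_{a ∈ A} f(x,r)(a) = 1 for all x, r, with p(a|x) = ∑_{r} q(r)·f(x,r)(a). For a tolerance ε > 0 set n = ⌈ln(2|X||A|)/(2ε²)⌉ + 1 (or any integer n with 2|A||X|·exp(−2nε²) < 1). If r⁽¹⁾,…,r⁽ⁿ⁾ are i.i.d. samples from q and p̂(a|x) = (1/n)∑_{i=1}^n f(x,r⁽ⁱ⁾)(a), then the probability (under q^{⊗n}) that |p(a|x) − p̂(a|x)| < ε holds simultaneously for all (a,x) ∈ A × X is strictly greater than 1 − 2|A||X|·exp(−2nε²) ≥ 0; in particular this event has positive probability. -/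

import Mathlib

open Classical

/-!
Markov's inequality for `cosh (t * X)` bounds `P(ε ≤ |X|)` by `exp (c * t ^ 2 / 2) / cosh (t * ε)`
when `X` is sub-Gaussian with parameter `c`. Since `exp (t * ε) < 2 * cosh (t * ε)`, the usual
two-sided Chernoff bound `2 * exp (-ε ^ 2 / (2 * c))` follows with strict inequality, with no
discussion of equality cases. Hoeffding's lemma makes the centred sum of bounded independent
variables sub-Gaussian, and a union bound over the finitely many pairs `(a, x)` keeps the
inequality strict.
-/

open MeasureTheory ProbabilityTheory Set

section SubGaussian

variable {Ω : Type*} [MeasurableSpace Ω] {μ : Measure Ω} {X : Ω → ℝ}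

lemma cosh_mul_measureReal_le_abs_le_mgf_add_mgf_neg [IsFiniteMeasure μ] {t ε : ℝ} (hε : 0 ≤ ε)
    (h_pos : Integrable (fun ω ↦ Real.exp (t * X ω)) μ)
    (h_neg : Integrable (fun ω ↦ Real.exp (-t * X ω)) μ) :
    Real.cosh (t * ε) * μ.real {ω | ε ≤ |X ω|} ≤ (mgf X μ t + mgf X μ (-t)) / 2 := by
  have h_cosh : (fun ω ↦ Real.cosh (t * X ω)) =
      fun ω ↦ (Real.exp (t * X ω) + Real.exp (-t * X ω)) / 2 := by
    simp only [Real.cosh_eq, neg_mul]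
  have h_subset : {ω | ε ≤ |X ω|} ⊆ {ω | Real.cosh (t * ε) ≤ Real.cosh (t * X ω)} := by
    intro ω (hω : ε ≤ |X ω|)
    simpa only [mem_ofPred_eq, Real.cosh_le_cosh, abs_mul, abs_of_nonneg hε] using
      mul_le_mul_of_nonneg_left hω (abs_nonneg t)
  calc Real.cosh (t * ε) * μ.real {ω | ε ≤ |X ω|}
      ≤ Real.cosh (t * ε) * μ.real {ω | Real.cosh (t * ε) ≤ Real.cosh (t * X ω)} := by
        gcongr
        finiteness
    _ ≤ ∫ ω, Real.cosh (t * X ω) ∂μ :=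
        mul_meas_ge_le_integral_of_nonneg (ae_of_all _ fun ω ↦ (Real.cosh_pos _).le)
          (h_cosh ▸ (h_pos.add h_neg).div_const 2) _
    _ = (mgf X μ t + mgf X μ (-t)) / 2 := by
        rw [h_cosh, integral_div, integral_add h_pos h_neg]
        rfl

lemma measureReal_le_abs_lt_of_hasSubgaussianMGF [IsFiniteMeasure μ] {c : NNReal}
    (h : HasSubgaussianMGF X c μ) {ε : ℝ} (hε : 0 ≤ ε) :
    μ.real {ω | ε ≤ |X ω|} < 2 * Real.exp (-ε ^ 2 / (2 * c)) := by
  -- The optimal parameter; for `c = 0` it is `0`, and the bound is the true statement `1 < 2`.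
  set t : ℝ := ε / c with ht
  have h_markov : Real.cosh (t * ε) * μ.real {ω | ε ≤ |X ω|} ≤ Real.exp (c * t ^ 2 / 2) := by
    have h_mgf_neg := h.mgf_le (-t)
    rw [neg_sq] at h_mgf_neg
    linarith [cosh_mul_measureReal_le_abs_le_mgf_add_mgf_neg hε
      (h.integrable_exp_mul t) (h.integrable_exp_mul (-t)), h.mgf_le t]
  have h_exp_lt : Real.exp (t * ε) < 2 * Real.cosh (t * ε) := by
    rw [Real.cosh_eq]
    linarith [Real.exp_pos (-(t * ε))]
  have h_exponent : c * t ^ 2 / 2 = t * ε + -ε ^ 2 / (2 * c) := by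
    rcases eq_or_ne c 0 with rfl | hc
    · simp [ht]
    · rw [ht]
      field
  refine lt_of_mul_lt_mul_left ?_ (Real.cosh_pos (t * ε)).le
  calc Real.cosh (t * ε) * μ.real {ω | ε ≤ |X ω|}
      ≤ Real.exp (t * ε) * Real.exp (-ε ^ 2 / (2 * c)) := by
        rwa [← Real.exp_add, ← h_exponent]
    _ < 2 * Real.cosh (t * ε) * Real.exp (-ε ^ 2 / (2 * c)) := by gcongr
    _ = Real.cosh (t * ε) * (2 * Real.exp (-ε ^ 2 / (2 * c))) := by ring

end SubGaussian

section Hoeffding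

variable {Ω ι : Type*} [MeasurableSpace Ω] {μ : Measure Ω} [Fintype ι]

lemma measureReal_le_abs_sum_sub_integral_lt_of_iIndepFun {X : ι → Ω → ℝ} {a b : ι → ℝ}
    (h_indep : iIndepFun X μ) (hX : ∀ i, AEMeasurable (X i) μ)
    (h_mem : ∀ i, ∀ᵐ ω ∂μ, X i ω ∈ Icc (a i) (b i)) {ε : ℝ} (hε : 0 ≤ ε) :
    μ.real {ω | ε ≤ |∑ i, (X i ω - ∫ ω', X i ω' ∂μ)|} <
      2 * Real.exp (-2 * ε ^ 2 / ∑ i, (b i - a i) ^ 2) := by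
  have : IsProbabilityMeasure μ := h_indep.isProbabilityMeasure
  have h_indep_centred : iIndepFun (fun i ω ↦ X i ω - ∫ ω', X i ω' ∂μ) μ :=
    h_indep.comp (fun i y ↦ y - ∫ ω', X i ω' ∂μ) fun i ↦ measurable_id.sub_const _
  have h_sum := HasSubgaussianMGF.sum_of_iIndepFun h_indep_centred (s := Finset.univ)
    fun i _ ↦ hasSubgaussianMGF_of_mem_Icc (hX i) (h_mem i)
  convert! measureReal_le_abs_lt_of_hasSubgaussianMGF h_sum hε using 3
  simp only [NNReal.coe_sum, NNReal.coe_pow, NNReal.coe_div, coe_nnnorm, NNReal.coe_ofNat,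
    div_pow, Real.norm_eq_abs, sq_abs, ← Finset.sum_div]
  ring

lemma measureReal_pi_le_abs_integral_sub_average_lt [IsProbabilityMeasure μ] {g : Ω → ℝ}
    {a b : ℝ} (hg : AEMeasurable g μ) (h_mem : ∀ᵐ ω ∂μ, g ω ∈ Icc a b) {ε : ℝ} (hε : 0 ≤ ε)
    {n : ℕ} (hn : n ≠ 0) :
    (Measure.pi fun _ : Fin n ↦ μ).real {s | ε ≤ |∫ ω, g ω ∂μ - 1 / (n : ℝ) * ∑ i, g (s i)|} <
      2 * Real.exp (-2 * n * ε ^ 2 / (b - a) ^ 2) := by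
  have h_eval (i : Fin n) := Measure.quasiMeasurePreserving_eval (fun _ : Fin n ↦ μ) i
  have h_hoeffding := measureReal_le_abs_sum_sub_integral_lt_of_iIndepFun
    (iIndepFun_pi fun _ : Fin n ↦ hg) (fun i ↦ hg.comp_quasiMeasurePreserving (h_eval i))
    (fun i ↦ (h_eval i).ae h_mem) (mul_nonneg n.cast_nonneg hε)
  simp only [integral_comp_eval (μ := fun _ : Fin n ↦ μ) hg.aestronglyMeasurable,
    Finset.sum_sub_distrib, Finset.sum_const, Finset.card_univ, Fintype.card_fin,
    nsmul_eq_mul] at h_hoeffding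
  convert! h_hoeffding using 3
  · ext s
    have h_scale : ∑ i, g (s i) - n * ∫ ω, g ω ∂μ =
        -(n * (∫ ω, g ω ∂μ - 1 / (n : ℝ) * ∑ i, g (s i))) := by
      field
    rw [h_scale, abs_neg, abs_mul, Nat.abs_cast]
    exact (mul_le_mul_iff_right₀ (by positivity)).symm
  · field

end Hoeffding

section UnionBound

variable {Ω ι : Type*} [MeasurableSpace Ω] {μ : Measure Ω} [IsProbabilityMeasure μ]
  [Fintype ι] [Nonempty ι]

lemma one_sub_card_mul_lt_measureReal_forall {p : ι → Ω → Prop} {δ : ℝ}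
    (h : ∀ j, μ.real {ω | ¬ p j ω} < δ) :
    1 - Fintype.card ι * δ < μ.real {ω | ∀ j, p j ω} := by
  have h_compl : {ω | ∀ j, p j ω}ᶜ = ⋃ j, {ω | ¬ p j ω} := by
    ext ω
    simp
  have h_union : μ.real {ω | ∀ j, p j ω}ᶜ < Fintype.card ι * δ :=
    calc μ.real {ω | ∀ j, p j ω}ᶜ
        ≤ ∑ j, μ.real {ω | ¬ p j ω} := h_compl ▸ measureReal_iUnion_fintype_le _
      _ < ∑ _j : ι, δ := Finset.sum_lt_sum_of_nonempty Finset.univ_nonempty fun j _ ↦ h j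
      _ = Fintype.card ι * δ := by simp
  have h_cover : 1 ≤ μ.real {ω | ∀ j, p j ω} + μ.real {ω | ∀ j, p j ω}ᶜ := by
    rw [← probReal_univ (μ := μ), ← union_compl_self {ω | ∀ j, p j ω}]
    exact measureReal_union_le _ _
  linarith

lemma one_sub_lt_measureReal_pi_forall_abs_integral_sub_average_lt {g : ι → Ω → ℝ} {a b : ℝ}
    (hg : ∀ j, AEMeasurable (g j) μ) (h_mem : ∀ j, ∀ᵐ ω ∂μ, g j ω ∈ Icc a b)
    {ε : ℝ} (hε : 0 ≤ ε) {n : ℕ} (hn : n ≠ 0) :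
    1 - Fintype.card ι * (2 * Real.exp (-2 * n * ε ^ 2 / (b - a) ^ 2)) <
      (Measure.pi fun _ : Fin n ↦ μ).real
        {s | ∀ j, |∫ ω, g j ω ∂μ - 1 / (n : ℝ) * ∑ i, g j (s i)| < ε} := by
  refine one_sub_card_mul_lt_measureReal_forall fun j ↦ ?_
  simp only [not_lt]
  exact measureReal_pi_le_abs_integral_sub_average_lt (hg j) (h_mem j) hε hn

end UnionBound

section Finite

lemma exists_isProbabilityMeasure_measureReal_singleton_eq {R : Type*} [Fintype R]
    [MeasurableSpace R] [MeasurableSingletonClass R] {q : R → ℝ} (hq0 : ∀ r, 0 ≤ q r)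
    (hq1 : ∑ r, q r = 1) :
    ∃ μ : Measure R, IsProbabilityMeasure μ ∧ ∀ r, μ.real {r} = q r := by
  have h_sum : ∑ r, ENNReal.ofReal (q r) = 1 := by
    rw [← ENNReal.ofReal_sum_of_nonneg fun r _ ↦ hq0 r, hq1, ENNReal.ofReal_one]
  refine ⟨(PMF.ofFintype _ h_sum).toMeasure, inferInstance, fun r ↦ ?_⟩
  rw [measureReal_def, PMF.toMeasure_apply_singleton _ _ (measurableSet_singleton r),
    PMF.ofFintype_apply, ENNReal.toReal_ofReal (hq0 r)]

lemma measureReal_pi_eq_sum {ι : Type*} [Fintype ι] [DecidableEq ι] {R : ι → Type*}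
    [∀ i, Fintype (R i)] [∀ i, MeasurableSpace (R i)] [∀ i, MeasurableSingletonClass (R i)]
    (μ : ∀ i, Measure (R i)) [∀ i, IsFiniteMeasure (μ i)] (p : (∀ i, R i) → Prop)
    [DecidablePred p] :
    (Measure.pi μ).real {s | p s} =
      ∑ s, (∏ i, (μ i).real {s i}) * if p s then 1 else 0 := by
  simp only [mul_ite, mul_one, mul_zero, ← Finset.sum_filter]
  rw [← Finset.coe_filter_univ, ← sum_measureReal_singleton]
  simp only [measureReal_def, Measure.pi_singleton, ENNReal.toReal_prod]

end Finite

theorem stmt_13_general {X A R : Type*} [Fintype X] [Fintype A] [MeasurableSpace R]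
    [Nonempty X] [Nonempty A] (μ : Measure R) [IsProbabilityMeasure μ] (f : X → R → A → ℝ)
    (hf : ∀ x a, AEMeasurable (fun r ↦ f x r a) μ)
    (hf01 : ∀ x a, ∀ᵐ r ∂μ, f x r a ∈ Icc 0 1) (ε : ℝ) (hε : 0 ≤ ε) (n : ℕ)
    (hn : 2 * Fintype.card A * Fintype.card X * Real.exp (-2 * n * ε ^ 2) < 1) :
    (Measure.pi fun _ : Fin n ↦ μ).real {s | ∀ (a : A) (x : X),
        |∫ r, f x r a ∂μ - 1 / (n : ℝ) * ∑ i, f x (s i) a| < ε}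
      > 1 - 2 * Fintype.card A * Fintype.card X * Real.exp (-2 * n * ε ^ 2) ∧
    0 < (Measure.pi fun _ : Fin n ↦ μ).real {s | ∀ (a : A) (x : X),
        |∫ r, f x r a ∂μ - 1 / (n : ℝ) * ∑ i, f x (s i) a| < ε} := by
  have hn0 : n ≠ 0 := by
    rintro rfl
    have h_card : (1 : ℝ) ≤ Fintype.card A * Fintype.card X := by
      exact_mod_cast Nat.one_le_iff_ne_zero.2 (by positivity)
    norm_num at hn
    linarith
  have h_lt := one_sub_lt_measureReal_pi_forall_abs_integral_sub_average_lt
    (g := fun (ax : A × X) r ↦ f ax.2 r ax.1) (fun ax ↦ hf ax.2 ax.1) (fun ax ↦ hf01 ax.2 ax.1)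
    hε hn0
  have h_card : Fintype.card (A × X) * (2 * Real.exp (-2 * n * ε ^ 2 / (1 - 0) ^ 2)) =
      2 * Fintype.card A * Fintype.card X * Real.exp (-2 * n * ε ^ 2) := by
    rw [Fintype.card_prod, Nat.cast_mul, sub_zero, one_pow, div_one]
    ring
  simp only [h_card, Prod.forall] at h_lt
  exact ⟨h_lt, by linarith⟩

/-- for any `n` with `2|A||X|·exp(−2nε²) < 1`, under the `n`-fold
product measure `q^{⊗n}` the event that `|p(a|x) − p̂(a|x)| < ε` holds simultaneously
for all `(a,x)` has probability strictly greater than `1 − 2|A||X|·exp(−2nε²)`;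
in particular the event has positive probability. -/
theorem stmt_13 {X A R : Type*} [Fintype X] [Fintype A] [Fintype R]
    [Nonempty X] [Nonempty A] [Nonempty R]
    (q : R → ℝ) (hq0 : ∀ r, 0 ≤ q r) (hq1 : ∑ r, q r = 1)
    (f : X → R → A → ℝ)
    (hf0 : ∀ x r a, 0 ≤ f x r a) (hf1 : ∀ x r a, f x r a ≤ 1)
    (hfsum : ∀ x r, ∑ a, f x r a = 1)
    (ε : ℝ) (hε : 0 < ε) (n : ℕ)
    (hn : 2 * Fintype.card A * Fintype.card X * Real.exp (-2 * n * ε ^ 2) < 1) :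
    ((∑ s : Fin n → R, (∏ i, q (s i)) *
        (if ∀ (a : A) (x : X),
            |(∑ r, q r * f x r a) - (1 / (n : ℝ)) * ∑ i, f x (s i) a| < ε
          then (1 : ℝ) else 0))
        > 1 - 2 * Fintype.card A * Fintype.card X * Real.exp (-2 * n * ε ^ 2)) ∧
    (0 < ∑ s : Fin n → R, (∏ i, q (s i)) *
        (if ∀ (a : A) (x : X),
            |(∑ r, q r * f x r a) - (1 / (n : ℝ)) * ∑ i, f x (s i) a| < ε
          then (1 : ℝ) else 0)) := by
  let _ : MeasurableSpace R := ⊤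
  obtain ⟨μ, _, hμ⟩ := exists_isProbabilityMeasure_measureReal_singleton_eq hq0 hq1
  simpa only [measureReal_pi_eq_sum, integral_fintype .of_finite, hμ, smul_eq_mul] using
    stmt_13_general μ f (fun _ _ ↦ measurable_from_top.aemeasurable)
      (fun x a ↦ ae_of_all _ fun r ↦ ⟨hf0 x r a, hf1 x r a⟩) ε hε.le n hn
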